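/- arXiv:2107.08913 — 2 statements merged into one kernel-verified Lean document; each statement's English description precedes it below -/
import Mathlib

section
/- Let φ, ψ be generalized dyadic resolutions on ℝ^N (i.e., φ_j(x) = 2^{N(j-1)}φ_1(2^{j-1}x) for j ≥ 1 with φ_1 Schwartz having all vanishing moments, and similarly for ψ). Then for any M > 0 and multi-index γ there is C > 0 such that for all j, k ∈ ℕ and l ∈ ℤ, ∫_{|x| ≥ 2^{-l}} |D^γ(φ_j ∗ ψ_k)(x)| dx ≤ C · 2^{min(j,k)|γ| − M(|j−k| + max(j,k) − l)}. -/
open MeasureTheory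

/-!
Let `j ≤ k` and put `a = 2 ^ j ≤ b = 2 ^ k`. Derivatives of the convolution are put on the
low-frequency block `g` (scale `a⁻¹`), and the vanishing moments of the high-frequency block `h`
(scale `b⁻¹`) allow one to subtract from `g (x - y)` its Taylor polynomial of degree `< n` at `x`.
The remainder costs `a ^ n` from the derivatives of `g` and gains `b⁻¹ ^ n` from
`∫ ‖y‖ ^ n ‖h y‖ dy`, which is the factor `2 ^ (-n (k - j))`. The Peetre inequality
`1 + a ‖x‖ ≤ (1 + a ‖x - t y‖) (1 + a ‖y‖)` carries the decay of `g` at scale `a⁻¹` over to the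
convolution, so the part outside a ball of radius `r` gains a factor `(1 + a r) ^ (-K)`. Since
`|j - k| + max j k - l = 2 (k - j) + (j - l)`, it suffices to take `n ≥ 2 M` and `K ≥ M`.
-/

section

open Module
open scoped SchwartzMap Convolution Nat

-- With the default depth, the norm on the type of `L.precompR E` is not found.
set_option maxSynthPendingDepth 3

universe u

section VanishingMoments

variable {E : Type u} {F F₁ F₂ F₃ : Type*} [NormedAddCommGroup E] [NormedSpace ℝ E]
  [NormedAddCommGroup F] [NormedSpace ℝ F] [NormedAddCommGroup F₁] [NormedSpace ℝ F₁]
  [NormedAddCommGroup F₂] [NormedSpace ℝ F₂] [NormedAddCommGroup F₃] [NormedSpace ℝ F₃]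

/-- The Taylor polynomial of `f` at `x` of degree `< n`, evaluated at the increment `y`. -/
noncomputable def taylorSum (n : ℕ) (f : E → F) (x y : E) : F :=
  ∑ i ∈ Finset.range n, (i ! : ℝ)⁻¹ • iteratedFDeriv ℝ i f x (fun _ => y)

lemma taylorSum_neg (n : ℕ) (f : E → F) (x y : E) :
    taylorSum n f x (-y) = ∑ i ∈ Finset.range n, ((i ! : ℝ)⁻¹ •
      (iteratedFDeriv ℝ i f x).compContinuousLinearMap fun _ => -.id ℝ E) fun _ => y := by
  simp [taylorSum]

lemma norm_taylor_integrand_le {f : E → F} {x y : E} {n : ℕ} {C t : ℝ}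
    (hC : ‖iteratedFDeriv ℝ (n + 1) f (x + t • y)‖ ≤ C) (ht : t ∈ Set.Icc (0 : ℝ) 1) :
    ‖(1 - t) ^ n • iteratedFDeriv ℝ (n + 1) f (x + t • y) (fun _ => y)‖ ≤ C * ‖y‖ ^ (n + 1) := by
  have h_weight : ‖(1 - t) ^ n‖ ≤ 1 := by
    rw [norm_pow, Real.norm_of_nonneg (by linarith [ht.2])]
    exact pow_le_one₀ (by linarith [ht.2]) (by linarith [ht.1])
  have h_apply : ‖iteratedFDeriv ℝ (n + 1) f (x + t • y) (fun _ => y)‖ ≤ C * ‖y‖ ^ (n + 1) := by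
    simpa using ContinuousMultilinearMap.le_of_opNorm_le hC (fun _ => y)
  rw [norm_smul]
  exact (mul_le_of_le_one_left (norm_nonneg _) h_weight).trans h_apply

lemma norm_sub_taylorSum_le [CompleteSpace F] {f : E → F} {x y : E} {n : ℕ} {C : ℝ}
    (hf : ContDiff ℝ n f)
    (hC : ∀ t ∈ Set.Icc (0 : ℝ) 1, ‖iteratedFDeriv ℝ n f (x + t • y)‖ ≤ C) :
    ‖f (x + y) - taylorSum n f x y‖ ≤ C * ‖y‖ ^ n := by
  rcases n with _ | n
  · simpa [taylorSum] using hC 1 (by simp)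
  have h_taylor := map_add_eq_sum_add_integral_iteratedFDeriv (f := f) (x := x) (y := y) (n := n)
    fun t _ => hf.contDiffAt
  have h_integral : ‖∫ t in (0 : ℝ)..1,
      (1 - t) ^ n • iteratedFDeriv ℝ (n + 1) f (x + t • y) (fun _ => y)‖ ≤ C * ‖y‖ ^ (n + 1) := by
    simpa using intervalIntegral.norm_integral_le_of_norm_le_const
      (a := (0 : ℝ)) (b := 1) fun t ht => by
        rw [Set.uIoc_of_le zero_le_one] at ht
        exact norm_taylor_integrand_le (hC t ⟨ht.1.le, ht.2⟩) ⟨ht.1.le, ht.2⟩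
  have h_factorial : ‖(n ! : ℝ)⁻¹‖ ≤ 1 := by
    rw [norm_inv, Real.norm_natCast]
    exact inv_le_one_of_one_le₀ (mod_cast n.factorial_pos)
  rw [h_taylor, taylorSum, add_sub_cancel_left, norm_smul]
  exact (mul_le_of_le_one_left (norm_nonneg _) h_factorial).trans h_integral

lemma one_add_mul_norm_le_mul {a t : ℝ} (ha : 0 ≤ a) (ht : t ∈ Set.Icc (0 : ℝ) 1) (x y : E) :
    1 + a * ‖x‖ ≤ (1 + a * ‖x + t • y‖) * (1 + a * ‖y‖) := by
  have h_norm : ‖x‖ ≤ ‖x + t • y‖ + ‖y‖ := calc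
    ‖x‖ = ‖(x + t • y) - t • y‖ := by rw [add_sub_cancel_right]
    _ ≤ ‖x + t • y‖ + ‖t • y‖ := norm_sub_le _ _
    _ ≤ ‖x + t • y‖ + ‖y‖ := by
      rw [norm_smul, Real.norm_of_nonneg ht.1]
      gcongr
      exact mul_le_of_le_one_left (norm_nonneg y) ht.2
  have h_cross : 0 ≤ a * ‖x + t • y‖ * (a * ‖y‖) := by positivity
  linarith [mul_le_mul_of_nonneg_left h_norm ha]

lemma weight_mul_norm_sub_taylorSum_le [CompleteSpace F] {f : E → F} {n K : ℕ} {a A : ℝ}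
    (ha : 0 ≤ a) (hf : ContDiff ℝ n f)
    (hA : ∀ z, (1 + a * ‖z‖) ^ K * ‖iteratedFDeriv ℝ n f z‖ ≤ A) (x y : E) :
    (1 + a * ‖x‖) ^ K * ‖f (x + y) - taylorSum n f x y‖ ≤
      A * (‖y‖ ^ n * (1 + a * ‖y‖) ^ K) := by
  have h_pos : 0 < (1 + a * ‖x‖) ^ K := by positivity
  have h_deriv : ∀ t ∈ Set.Icc (0 : ℝ) 1, ‖iteratedFDeriv ℝ n f (x + t • y)‖ ≤
      A * (1 + a * ‖y‖) ^ K / (1 + a * ‖x‖) ^ K := fun t ht => by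
    rw [le_div_iff₀' h_pos]
    calc (1 + a * ‖x‖) ^ K * ‖iteratedFDeriv ℝ n f (x + t • y)‖
        ≤ ((1 + a * ‖x + t • y‖) * (1 + a * ‖y‖)) ^ K * ‖iteratedFDeriv ℝ n f (x + t • y)‖ := by
          gcongr
          exact one_add_mul_norm_le_mul ha ht x y
      _ = (1 + a * ‖x + t • y‖) ^ K * ‖iteratedFDeriv ℝ n f (x + t • y)‖ *
            (1 + a * ‖y‖) ^ K := by rw [mul_pow]; ring
      _ ≤ A * (1 + a * ‖y‖) ^ K := by
          gcongr
          exact hA _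
  calc (1 + a * ‖x‖) ^ K * ‖f (x + y) - taylorSum n f x y‖
      ≤ (1 + a * ‖x‖) ^ K * (A * (1 + a * ‖y‖) ^ K / (1 + a * ‖x‖) ^ K * ‖y‖ ^ n) := by
        gcongr
        exact norm_sub_taylorSum_le hf h_deriv
    _ = A * (‖y‖ ^ n * (1 + a * ‖y‖) ^ K) := by field_simp

/-- The monomial `x ↦ ∏ i, x_{r i}` of degree `p` in the coordinates of the basis `b`, encoded as
the multilinear form of which it is the restriction to the diagonal. -/
noncomputable def coordMonomial {ι : Type*} [FiniteDimensional ℝ E] {p : ℕ} (b : Basis ι ℝ E)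
    (r : Fin p → ι) : E [×p]→L[ℝ] ℝ :=
  (ContinuousMultilinearMap.mkPiAlgebra ℝ (Fin p) ℝ).compContinuousLinearMap
    fun i => (b.coord (r i)).toContinuousLinearMap

lemma coordMonomial_apply {ι : Type*} [FiniteDimensional ℝ E] {p : ℕ} (b : Basis ι ℝ E)
    (r : Fin p → ι) (x : Fin p → E) : coordMonomial b r x = ∏ i, b.repr (x i) (r i) := by
  simp [coordMonomial]

lemma map_diag_eq_sum_coordMonomial {ι : Type*} [Fintype ι] [FiniteDimensional ℝ E] {p : ℕ}
    (b : Basis ι ℝ E) (T : E [×p]→L[ℝ] F) (x : E) :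
    T (fun _ => x) = ∑ r : Fin p → ι, coordMonomial b r (fun _ => x) • T (fun i => b (r i)) := by
  classical
  conv_lhs => rw [← b.sum_repr x]
  simp_rw [coordMonomial_apply, T.map_sum, T.map_smul_univ]

variable [MeasurableSpace E] [BorelSpace E] [FiniteDimensional ℝ E] {μ : Measure E}
  [μ.IsAddHaarMeasure]

/-- The function `f` has vanishing moments of order less than `n`: it is orthogonal to all
homogeneous polynomials of degree `p < n`, encoded as diagonals of `p`-linear forms so that no
choice of coordinates is involved. -/
def HasVanishingMoments (μ : Measure E) (n : ℕ) (f : E → F) : Prop :=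
  ∀ p < n, ∀ T : E [×p]→L[ℝ] ℝ, ∫ x, T (fun _ => x) • f x ∂μ = 0

lemma integrable_bilin_diag {p : ℕ} (B : F₁ →L[ℝ] F₂ →L[ℝ] F₃) (f : 𝓢(E, F₁))
    (T : E [×p]→L[ℝ] F₂) : Integrable (fun x => B (f x) (T fun _ => x)) μ := by
  refine ((f.integrable_pow_mul μ p).const_mul (‖B‖ * ‖T‖)).mono' ?_ (.of_forall fun x => ?_)
  · have := T.cont
    have := f.continuous
    exact Continuous.aestronglyMeasurable (by fun_prop)
  · have h_diag : ‖T fun _ => x‖ ≤ ‖T‖ * ‖x‖ ^ p := by simpa using T.le_opNorm fun _ => x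
    calc ‖B (f x) (T fun _ => x)‖ ≤ ‖B‖ * ‖f x‖ * (‖T‖ * ‖x‖ ^ p) :=
          B.le_of_opNorm₂_le_of_le le_rfl le_rfl h_diag
      _ = ‖B‖ * ‖T‖ * (‖x‖ ^ p * ‖f x‖) := by ring

lemma integrable_diag_smul {p : ℕ} (T : E [×p]→L[ℝ] ℝ) (f : 𝓢(E, F)) :
    Integrable (fun x => T (fun _ => x) • f x) μ :=
  integrable_bilin_diag (ContinuousLinearMap.lsmul ℝ ℝ).flip f T

lemma integral_bilin_diag_eq_zero {ι : Type*} [Finite ι] [CompleteSpace F₁] [CompleteSpace F₃]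
    {p : ℕ} (b : Basis ι ℝ E) (B : F₁ →L[ℝ] F₂ →L[ℝ] F₃) (T : E [×p]→L[ℝ] F₂) (f : 𝓢(E, F₁))
    (hf : ∀ r : Fin p → ι, ∫ x, coordMonomial b r (fun _ => x) • f x ∂μ = 0) :
    ∫ x, B (f x) (T fun _ => x) ∂μ = 0 := by
  have := Fintype.ofFinite ι
  have h_expand : ∀ x, B (f x) (T fun _ => x) =
      ∑ r : Fin p → ι, B.flip (T fun i => b (r i)) (coordMonomial b r (fun _ => x) • f x) :=
    fun x => by
      rw [map_diag_eq_sum_coordMonomial b T x]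
      simp only [map_sum, map_smul, ContinuousLinearMap.flip_apply]
  simp_rw [h_expand]
  rw [integral_finsetSum _ fun r _ =>
    ContinuousLinearMap.integrable_comp _ (integrable_diag_smul _ f)]
  refine Finset.sum_eq_zero fun r _ => ?_
  rw [ContinuousLinearMap.integral_comp_comm _ (integrable_diag_smul _ f), hf r, map_zero]

lemma hasVanishingMoments_of_basis {ι : Type*} [Finite ι] [CompleteSpace F] {n : ℕ}
    (b : Basis ι ℝ E) (f : 𝓢(E, F))
    (hf : ∀ p < n, ∀ r : Fin p → ι, ∫ x, (∏ i, b.repr x (r i)) • f x ∂μ = 0) :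
    HasVanishingMoments μ n f := fun p hp T => by
  refine integral_bilin_diag_eq_zero b (ContinuousLinearMap.lsmul ℝ ℝ).flip T f fun r => ?_
  simpa only [coordMonomial_apply] using hf p hp r

lemma HasVanishingMoments.integral_bilin_diag [CompleteSpace F₁] [CompleteSpace F₃] {n p : ℕ}
    {f : 𝓢(E, F₁)} (hf : HasVanishingMoments μ n f) (hp : p < n) (B : F₁ →L[ℝ] F₂ →L[ℝ] F₃)
    (T : E [×p]→L[ℝ] F₂) : ∫ x, B (f x) (T fun _ => x) ∂μ = 0 :=
  integral_bilin_diag_eq_zero (finBasis ℝ E) B T f fun r => hf p hp (coordMonomial _ r)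

lemma HasVanishingMoments.const_smul_comp_smul {n : ℕ} {f : E → F}
    (hf : HasVanishingMoments μ n f) (c : ℝ) {R : ℝ} (hR : R ≠ 0) :
    HasVanishingMoments μ n fun x => c • f (R • x) := fun p hp T => by
  have h_scale : ∀ x, T (fun _ => x) • c • f (R • x) =
      (c * (R ^ p)⁻¹) • (T (fun _ => R • x) • f (R • x)) := fun x => by
    have h_homogeneous : T (fun _ => R • x) = R ^ p * T (fun _ => x) := by
      simpa using T.map_smul_univ (fun _ => R) (fun _ => x)
    rw [h_homogeneous, smul_smul, smul_smul]
    congr 1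
    field_simp
  simp_rw [h_scale]
  rw [integral_smul, Measure.integral_comp_smul μ (fun x => T (fun _ => x) • f x), hf p hp T,
    smul_zero, smul_zero]

end VanishingMoments

section Convolution

variable {E : Type u} {F₁ F₂ F₃ : Type*} [NormedAddCommGroup E] [NormedSpace ℝ E]
  [FiniteDimensional ℝ E] [MeasurableSpace E] [BorelSpace E] {μ : Measure E} [μ.IsAddHaarMeasure]
  [NormedAddCommGroup F₁] [NormedSpace ℝ F₁] [NormedAddCommGroup F₂] [NormedSpace ℝ F₂]
  [NormedAddCommGroup F₃] [NormedSpace ℝ F₃]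

lemma convolutionExists_of_integrable_of_bounded (L : F₁ →L[ℝ] F₂ →L[ℝ] F₃) {h : E → F₁}
    {g : E → F₂} {C : ℝ} (hh : Integrable h μ) (hg : Continuous g) (hC : ∀ x, ‖g x‖ ≤ C) :
    ConvolutionExists h g L μ := fun x =>
  BddAbove.convolutionExistsAt L (s := Set.univ) ⟨C, by rintro _ ⟨y, -, rfl⟩; exact hC y⟩
    .univ (Set.subset_univ _) hh.integrableOn hg.aestronglyMeasurable

lemma hasFDerivAt_convolution_of_bounded (L : F₁ →L[ℝ] F₂ →L[ℝ] F₃) {h : E → F₁} {g : E → F₂}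
    {C C' : ℝ} (hh : Integrable h μ) (hg : ContDiff ℝ 1 g) (hC : ∀ x, ‖g x‖ ≤ C)
    (hC' : ∀ x, ‖fderiv ℝ g x‖ ≤ C') (x : E) :
    HasFDerivAt (h ⋆[L, μ] g) ((h ⋆[L.precompR E, μ] fderiv ℝ g) x) x := by
  have h_exists := convolutionExists_of_integrable_of_bounded (μ := μ) L hh hg.continuous hC
  have h_exists' := convolutionExists_of_integrable_of_bounded (μ := μ) (L.precompR E) hh
    (hg.continuous_fderiv one_ne_zero) hC'
  have h_shift : ∀ y z : E, HasFDerivAt (fun z => g (z - y)) (fderiv ℝ g (z - y)) z := fun y z =>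
    (hg.differentiable one_ne_zero (z - y)).hasFDerivAt |> (hasFDerivAt_comp_sub y).2
  refine hasFDerivAt_integral_of_dominated_of_fderiv_le (s := Set.univ)
    (F' := fun z y => L.precompR E (h y) (fderiv ℝ g (z - y)))
    (bound := fun y => ‖L.precompR E‖ * ‖h y‖ * C') Filter.univ_mem
    (.of_forall fun z => (h_exists z).aestronglyMeasurable) (h_exists x)
    (h_exists' x).aestronglyMeasurable (.of_forall fun y z _ => ?_)
    ((hh.norm.const_mul _).mul_const _) (.of_forall fun y z _ => ?_)
  · exact (L.precompR E).le_of_opNorm₂_le_of_le le_rfl le_rfl (hC' _)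
  · exact L.hasFDerivAt_of_bilinear (hasFDerivAt_const (h y) z) (h_shift y z) |>.congr_fderiv
      (by ext; simp)

lemma fderiv_convolution (L : F₁ →L[ℝ] F₂ →L[ℝ] F₃) (h : 𝓢(E, F₁)) (g : 𝓢(E, F₂)) :
    fderiv ℝ (h ⋆[L, μ] g) = h ⋆[L.precompR E, μ] SchwartzMap.fderivCLM ℝ E F₂ g := by
  ext1 x
  have h_bound := SchwartzMap.norm_le_seminorm ℝ g
  have h_bound' := SchwartzMap.norm_le_seminorm ℝ (SchwartzMap.fderivCLM ℝ E F₂ g)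
  exact (hasFDerivAt_convolution_of_bounded L h.integrable (g.smooth 1) h_bound h_bound' x).fderiv

lemma integrable_norm_mul_weight (h : 𝓢(E, F₁)) (n K : ℕ) (a : ℝ) :
    Integrable (fun y => ‖h y‖ * (‖y‖ ^ n * (1 + a * ‖y‖) ^ K)) μ := by
  have h_expand : ∀ y, ‖h y‖ * (‖y‖ ^ n * (1 + a * ‖y‖) ^ K) =
      ∑ i ∈ Finset.range (K + 1), a ^ i * K.choose i * (‖y‖ ^ (n + i) * ‖h y‖) := fun y => by
    rw [add_comm 1, add_pow, Finset.mul_sum, Finset.mul_sum]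
    refine Finset.sum_congr rfl fun i _ => ?_
    rw [mul_pow, one_pow, pow_add]
    ring
  simp_rw [h_expand]
  exact integrable_finsetSum _ fun i _ => (h.integrable_pow_mul μ (n + i)).const_mul _

lemma integrable_bilin_taylorSum (L : F₁ →L[ℝ] F₂ →L[ℝ] F₃) (n : ℕ)
    (h : 𝓢(E, F₁)) (g : E → F₂) (x : E) :
    Integrable (fun y => L (h y) (taylorSum n g x (-y))) μ := by
  simp_rw [taylorSum_neg, map_sum]
  exact integrable_finsetSum _ fun i _ => integrable_bilin_diag L h _

variable [CompleteSpace F₁] [CompleteSpace F₃]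

lemma HasVanishingMoments.integral_bilin_taylorSum {n : ℕ} {h : 𝓢(E, F₁)}
    (hh : HasVanishingMoments μ n h) (L : F₁ →L[ℝ] F₂ →L[ℝ] F₃) (g : E → F₂) (x : E) :
    ∫ y, L (h y) (taylorSum n g x (-y)) ∂μ = 0 := by
  simp_rw [taylorSum_neg, map_sum]
  rw [integral_finsetSum _ fun i _ => integrable_bilin_diag L h _]
  exact Finset.sum_eq_zero fun i hi => hh.integral_bilin_diag (Finset.mem_range.1 hi) L _

lemma HasVanishingMoments.convolution_eq_integral_sub_taylorSum {n : ℕ} {h : 𝓢(E, F₁)}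
    (hh : HasVanishingMoments μ n h) (L : F₁ →L[ℝ] F₂ →L[ℝ] F₃) (g : 𝓢(E, F₂)) (x : E) :
    (h ⋆[L, μ] g) x = ∫ y, L (h y) (g (x + -y) - taylorSum n g x (-y)) ∂μ := by
  have h_exists : Integrable (fun y => L (h y) (g (x + -y))) μ := by
    simp_rw [← sub_eq_add_neg]
    exact convolutionExists_of_integrable_of_bounded (μ := μ) L
      h.integrable g.continuous (SchwartzMap.norm_le_seminorm ℝ g) x
  simp_rw [map_sub]
  rw [integral_sub h_exists (integrable_bilin_taylorSum L n h g x),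
    hh.integral_bilin_taylorSum L g x, sub_zero]
  simp_rw [convolution_def, sub_eq_add_neg]

lemma HasVanishingMoments.weight_mul_norm_convolution_le {n K : ℕ} {h : 𝓢(E, F₁)}
    (hh : HasVanishingMoments μ n h) [CompleteSpace F₂] (L : F₁ →L[ℝ] F₂ →L[ℝ] F₃) (g : 𝓢(E, F₂))
    {a A : ℝ} (ha : 0 ≤ a) (hA : ∀ z, (1 + a * ‖z‖) ^ K * ‖iteratedFDeriv ℝ n g z‖ ≤ A) (x : E) :
    (1 + a * ‖x‖) ^ K * ‖(h ⋆[L, μ] g) x‖ ≤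
      ‖L‖ * A * ∫ y, ‖h y‖ * (‖y‖ ^ n * (1 + a * ‖y‖) ^ K) ∂μ := by
  have h_integrand : ∀ y, ‖(1 + a * ‖x‖) ^ K • L (h y) (g (x + -y) - taylorSum n g x (-y))‖ ≤
      ‖L‖ * A * (‖h y‖ * (‖y‖ ^ n * (1 + a * ‖y‖) ^ K)) := fun y => calc
    ‖(1 + a * ‖x‖) ^ K • L (h y) (g (x + -y) - taylorSum n g x (-y))‖
      ≤ (1 + a * ‖x‖) ^ K * (‖L‖ * ‖h y‖ * ‖g (x + -y) - taylorSum n g x (-y)‖) := by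
        rw [norm_smul, Real.norm_of_nonneg (by positivity)]
        gcongr
        exact L.le_opNorm₂ _ _
    _ = ‖L‖ * ‖h y‖ * ((1 + a * ‖x‖) ^ K * ‖g (x + -y) - taylorSum n g x (-y)‖) := by ring
    _ ≤ ‖L‖ * ‖h y‖ * (A * (‖-y‖ ^ n * (1 + a * ‖-y‖) ^ K)) := by
        refine mul_le_mul_of_nonneg_left ?_ (by positivity)
        exact weight_mul_norm_sub_taylorSum_le ha (g.smooth n) hA x (-y)
    _ = ‖L‖ * A * (‖h y‖ * (‖y‖ ^ n * (1 + a * ‖y‖) ^ K)) := by rw [norm_neg]; ring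
  calc (1 + a * ‖x‖) ^ K * ‖(h ⋆[L, μ] g) x‖
      = ‖∫ y, (1 + a * ‖x‖) ^ K • L (h y) (g (x + -y) - taylorSum n g x (-y)) ∂μ‖ := by
        rw [integral_smul, norm_smul, Real.norm_of_nonneg (by positivity),
          hh.convolution_eq_integral_sub_taylorSum L g x]
    _ ≤ ∫ y, ‖L‖ * A * (‖h y‖ * (‖y‖ ^ n * (1 + a * ‖y‖) ^ K)) ∂μ :=
        norm_integral_le_of_norm_le ((integrable_norm_mul_weight h n K a).const_mul _)
          (.of_forall h_integrand)
    _ = ‖L‖ * A * ∫ y, ‖h y‖ * (‖y‖ ^ n * (1 + a * ‖y‖) ^ K) ∂μ := integral_const_mul _ _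

end Convolution

section Derivatives

variable {E F₂ F₃ : Type u} {F₁ : Type*} [NormedAddCommGroup E] [NormedSpace ℝ E]
  [FiniteDimensional ℝ E] [MeasurableSpace E] [BorelSpace E] {μ : Measure E} [μ.IsAddHaarMeasure]
  [NormedAddCommGroup F₁] [NormedSpace ℝ F₁] [NormedAddCommGroup F₂] [NormedSpace ℝ F₂]
  [NormedAddCommGroup F₃] [NormedSpace ℝ F₃] [CompleteSpace F₁] [CompleteSpace F₂]
  [CompleteSpace F₃]

lemma HasVanishingMoments.weight_mul_norm_iteratedFDeriv_convolution_le {n K : ℕ} {h : 𝓢(E, F₁)}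
    (hh : HasVanishingMoments μ n h) (L : F₁ →L[ℝ] F₂ →L[ℝ] F₃) (g : 𝓢(E, F₂)) (m : ℕ) {a A : ℝ}
    (ha : 0 ≤ a) (hA : ∀ z, (1 + a * ‖z‖) ^ K * ‖iteratedFDeriv ℝ (n + m) g z‖ ≤ A) (x : E) :
    (1 + a * ‖x‖) ^ K * ‖iteratedFDeriv ℝ m (h ⋆[L, μ] g) x‖ ≤
      ‖L‖ * A * ∫ y, ‖h y‖ * (‖y‖ ^ n * (1 + a * ‖y‖) ^ K) ∂μ := by
  induction m generalizing F₂ F₃ with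
  | zero => simpa using hh.weight_mul_norm_convolution_le L g ha hA x
  | succ m ih =>
    have h_A : 0 ≤ A := le_trans (by positivity) (hA 0)
    have h_deriv : ∀ z, ‖iteratedFDeriv ℝ (n + m) (SchwartzMap.fderivCLM ℝ E F₂ g) z‖ =
        ‖iteratedFDeriv ℝ (n + (m + 1)) g z‖ := fun z => norm_iteratedFDeriv_fderiv
    rw [← norm_iteratedFDeriv_fderiv, fderiv_convolution]
    refine (ih (L.precompR E) (SchwartzMap.fderivCLM ℝ E F₂ g) (by simpa only [h_deriv])).trans ?_
    gcongr
    exact L.norm_precompR_le E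

end Derivatives

section Weights

variable {E : Type u} {F : Type*} [NormedAddCommGroup E] [NormedSpace ℝ E] [FiniteDimensional ℝ E]
  [MeasurableSpace E] [BorelSpace E] {μ : Measure E} [μ.IsAddHaarMeasure] [NormedAddCommGroup F]

/-- The integral of the weight `(1 + ‖x‖) ^ (-(d + 1))` over a space of dimension `d`; it is the
constant in the `L¹` bounds for functions with polynomial decay. -/
noncomputable def weightIntegral (μ : Measure E) : ℝ :=
  ∫ x, ((1 + ‖x‖) ^ (finrank ℝ E + 1))⁻¹ ∂μ

lemma integrable_inv_one_add_norm_pow :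
    Integrable (fun x : E => ((1 + ‖x‖) ^ (finrank ℝ E + 1))⁻¹) μ := by
  refine (integrable_one_add_norm (μ := μ) (r := (finrank ℝ E + 1 : ℕ)) (by simp)).congr
    (.of_forall fun x => ?_)
  dsimp only
  rw [Real.rpow_neg (by positivity), Real.rpow_natCast]

lemma integrable_inv_one_add_mul_norm_pow {R : ℝ} (hR : 0 < R) :
    Integrable (fun x : E => ((1 + R * ‖x‖) ^ (finrank ℝ E + 1))⁻¹) μ := by
  simpa only [norm_smul, Real.norm_of_nonneg hR.le] using
    integrable_inv_one_add_norm_pow.comp_smul (μ := μ) hR.ne'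

lemma integral_inv_one_add_mul_norm_pow {R : ℝ} (hR : 0 < R) :
    ∫ x : E, ((1 + R * ‖x‖) ^ (finrank ℝ E + 1))⁻¹ ∂μ =
      (R ^ finrank ℝ E)⁻¹ * weightIntegral μ := by
  have h_scale := Measure.integral_comp_smul μ
    (fun x : E => ((1 + ‖x‖) ^ (finrank ℝ E + 1))⁻¹) R
  simp_rw [norm_smul, Real.norm_of_nonneg hR.le] at h_scale
  rw [h_scale, abs_of_pos (by positivity), smul_eq_mul, weightIntegral]

lemma integral_norm_mul_weight_le {h : E → F} {n K : ℕ} {a b B : ℝ} (ha : 0 ≤ a) (hab : a ≤ b)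
    (hb : 0 < b) (hB : ∀ y, (1 + b * ‖y‖) ^ (n + K + (finrank ℝ E + 1)) * ‖h y‖ ≤ B) :
    ∫ y, ‖h y‖ * (‖y‖ ^ n * (1 + a * ‖y‖) ^ K) ∂μ ≤
      B * (b ^ n)⁻¹ * ((b ^ finrank ℝ E)⁻¹ * weightIntegral μ) := by
  have h_pointwise : ∀ y, ‖h y‖ * (‖y‖ ^ n * (1 + a * ‖y‖) ^ K) ≤
      B * (b ^ n)⁻¹ * ((1 + b * ‖y‖) ^ (finrank ℝ E + 1))⁻¹ := fun y => by
    rw [← div_eq_mul_inv, ← div_eq_mul_inv, div_div, le_div_iff₀ (by positivity)]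
    calc ‖h y‖ * (‖y‖ ^ n * (1 + a * ‖y‖) ^ K) * (b ^ n * (1 + b * ‖y‖) ^ (finrank ℝ E + 1))
        = (b * ‖y‖) ^ n * (1 + a * ‖y‖) ^ K * (1 + b * ‖y‖) ^ (finrank ℝ E + 1) * ‖h y‖ := by
          rw [mul_pow]; ring
      _ ≤ (1 + b * ‖y‖) ^ n * (1 + b * ‖y‖) ^ K * (1 + b * ‖y‖) ^ (finrank ℝ E + 1) * ‖h y‖ := by
          gcongr
          exact le_add_of_nonneg_left zero_le_one
      _ = (1 + b * ‖y‖) ^ (n + K + (finrank ℝ E + 1)) * ‖h y‖ := by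
          rw [pow_add _ (n + K), pow_add _ n]
      _ ≤ B := hB y
  calc ∫ y, ‖h y‖ * (‖y‖ ^ n * (1 + a * ‖y‖) ^ K) ∂μ
      ≤ ∫ y, B * (b ^ n)⁻¹ * ((1 + b * ‖y‖) ^ (finrank ℝ E + 1))⁻¹ ∂μ :=
        integral_mono_of_nonneg (.of_forall fun y => by positivity)
          ((integrable_inv_one_add_mul_norm_pow hb).const_mul _) (.of_forall h_pointwise)
    _ = B * (b ^ n)⁻¹ * ((b ^ finrank ℝ E)⁻¹ * weightIntegral μ) := by
        rw [integral_const_mul, integral_inv_one_add_mul_norm_pow hb]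

lemma setIntegral_norm_le_of_weight_mul_norm_le {f : E → F} {K : ℕ} {a r Q : ℝ} (ha : 0 < a)
    (hr : 0 ≤ r) (hQ : ∀ x, (1 + a * ‖x‖) ^ (K + (finrank ℝ E + 1)) * ‖f x‖ ≤ Q) :
    ∫ x in {x | r ≤ ‖x‖}, ‖f x‖ ∂μ ≤
      Q * ((1 + a * r) ^ K)⁻¹ * ((a ^ finrank ℝ E)⁻¹ * weightIntegral μ) := by
  have h_Q : 0 ≤ Q := le_trans (by positivity) (hQ 0)
  have h_pointwise : ∀ x, r ≤ ‖x‖ → ‖f x‖ ≤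
      Q * ((1 + a * r) ^ K)⁻¹ * ((1 + a * ‖x‖) ^ (finrank ℝ E + 1))⁻¹ := fun x hx => by
    rw [← div_eq_mul_inv, ← div_eq_mul_inv, div_div, le_div_iff₀ (by positivity)]
    calc ‖f x‖ * ((1 + a * r) ^ K * (1 + a * ‖x‖) ^ (finrank ℝ E + 1))
        ≤ ‖f x‖ * ((1 + a * ‖x‖) ^ K * (1 + a * ‖x‖) ^ (finrank ℝ E + 1)) := by gcongr
      _ = (1 + a * ‖x‖) ^ (K + (finrank ℝ E + 1)) * ‖f x‖ := by rw [← pow_add, mul_comm]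
      _ ≤ Q := hQ x
  have h_integrable := (integrable_inv_one_add_mul_norm_pow (μ := μ) ha).const_mul
    (Q * ((1 + a * r) ^ K)⁻¹)
  calc ∫ x in {x | r ≤ ‖x‖}, ‖f x‖ ∂μ
      ≤ ∫ x in {x | r ≤ ‖x‖},
          Q * ((1 + a * r) ^ K)⁻¹ * ((1 + a * ‖x‖) ^ (finrank ℝ E + 1))⁻¹ ∂μ :=
        integral_mono_of_nonneg (.of_forall fun x => norm_nonneg _) h_integrable.integrableOn
          (ae_restrict_of_forall_mem (measurableSet_le measurable_const measurable_norm)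
            h_pointwise)
    _ ≤ ∫ x, Q * ((1 + a * r) ^ K)⁻¹ * ((1 + a * ‖x‖) ^ (finrank ℝ E + 1))⁻¹ ∂μ :=
        setIntegral_le_integral h_integrable (.of_forall fun x => by positivity)
    _ = Q * ((1 + a * r) ^ K)⁻¹ * ((a ^ finrank ℝ E)⁻¹ * weightIntegral μ) := by
        rw [integral_const_mul, integral_inv_one_add_mul_norm_pow ha]

end Weights

section DyadicResolution

variable {E : Type u} {F : Type*} [NormedAddCommGroup E] [NormedSpace ℝ E]
  [NormedAddCommGroup F] [NormedSpace ℝ F]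

lemma exists_one_add_norm_pow_mul_norm_iteratedFDeriv_le (f : 𝓢(E, F)) (K p : ℕ) :
    ∃ C, ∀ x, (1 + ‖x‖) ^ K * ‖iteratedFDeriv ℝ p f x‖ ≤ C :=
  ⟨_, SchwartzMap.one_add_le_sup_seminorm_apply (𝕜 := ℝ) (m := (K, p)) le_rfl le_rfl f⟩

lemma norm_iteratedFDeriv_const_smul_comp_smul (f : 𝓢(E, F)) (p : ℕ) {c R : ℝ} (hc : 0 ≤ c)
    (hR : 0 ≤ R) (x : E) : ‖iteratedFDeriv ℝ p (fun x => c • f (R • x)) x‖ =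
      c * R ^ p * ‖iteratedFDeriv ℝ p f (R • x)‖ := by
  have h_smooth : ContDiff ℝ p fun x => f (R • x) := (f.smooth p).comp (contDiff_const_smul R)
  rw [iteratedFDeriv_const_smul_apply' h_smooth.contDiffAt,
    iteratedFDeriv_comp_const_smul _ (f.smooth p), norm_smul, norm_smul, norm_pow,
    Real.norm_of_nonneg hc, Real.norm_of_nonneg hR, mul_assoc]

variable [MeasurableSpace E] {μ : Measure E} {Φ : ℕ → 𝓢(E, F)}

/-- A generalized dyadic resolution: the blocks `Φ j` with `j ≥ 1` are the `L¹`-normalized dyadic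
dilates of `Φ 1`, all of whose moments vanish. The low-frequency block `Φ 0` is arbitrary. -/
structure IsDyadicResolution (μ : Measure E) (Φ : ℕ → 𝓢(E, F)) : Prop where
  dilation : ∀ j x, Φ (j + 1) x = (2 : ℝ) ^ (finrank ℝ E * j) • Φ 1 ((2 : ℝ) ^ j • x)
  moments : ∀ n, HasVanishingMoments μ n (Φ 1)

lemma IsDyadicResolution.exists_weight_mul_norm_iteratedFDeriv_le (hΦ : IsDyadicResolution μ Φ)
    (K p : ℕ) : ∃ C, ∀ j x, (1 + 2 ^ j * ‖x‖) ^ K * ‖iteratedFDeriv ℝ p (Φ j) x‖ ≤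
      C * ((2 : ℝ) ^ j) ^ (finrank ℝ E + p) := by
  obtain ⟨C₀, hC₀⟩ := exists_one_add_norm_pow_mul_norm_iteratedFDeriv_le (Φ 0) K p
  obtain ⟨C₁, hC₁⟩ := exists_one_add_norm_pow_mul_norm_iteratedFDeriv_le (Φ 1) K p
  refine ⟨max C₀ (2 ^ K * C₁), fun j x => ?_⟩
  rcases j with _ | j
  · simpa using Or.inl (hC₀ x)
  have h_C₁ : 0 ≤ C₁ := le_trans (by positivity) (hC₁ 0)
  have h_weight : 1 + 2 ^ (j + 1) * ‖x‖ ≤ 2 * (1 + ‖(2 : ℝ) ^ j • x‖) := by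
    rw [norm_smul, norm_pow, Real.norm_ofNat, pow_succ]
    linarith
  rw [show ⇑(Φ (j + 1)) = _ from funext (hΦ.dilation j),
    norm_iteratedFDeriv_const_smul_comp_smul _ _ (by positivity) (by positivity)]
  calc (1 + 2 ^ (j + 1) * ‖x‖) ^ K * ((2 : ℝ) ^ (finrank ℝ E * j) * (2 ^ j) ^ p *
        ‖iteratedFDeriv ℝ p (Φ 1) ((2 : ℝ) ^ j • x)‖)
      ≤ (2 * (1 + ‖(2 : ℝ) ^ j • x‖)) ^ K * ((2 : ℝ) ^ (finrank ℝ E * j) * (2 ^ j) ^ p *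
        ‖iteratedFDeriv ℝ p (Φ 1) ((2 : ℝ) ^ j • x)‖) := by gcongr
    _ = 2 ^ K * ((1 + ‖(2 : ℝ) ^ j • x‖) ^ K * ‖iteratedFDeriv ℝ p (Φ 1) ((2 : ℝ) ^ j • x)‖) *
        ((2 : ℝ) ^ j) ^ (finrank ℝ E + p) := by rw [mul_pow]; ring
    _ ≤ 2 ^ K * C₁ * ((2 : ℝ) ^ (j + 1)) ^ (finrank ℝ E + p) := by
        gcongr
        · exact hC₁ _
        · exact one_le_two
        · exact j.le_succ
    _ ≤ max C₀ (2 ^ K * C₁) * ((2 : ℝ) ^ (j + 1)) ^ (finrank ℝ E + p) := by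
        gcongr
        exact le_max_right _ _

lemma IsDyadicResolution.hasVanishingMoments [FiniteDimensional ℝ E] [BorelSpace E]
    [μ.IsAddHaarMeasure] (hΦ : IsDyadicResolution μ Φ) (n j : ℕ) :
    HasVanishingMoments μ n (Φ (j + 1)) := by
  rw [show ⇑(Φ (j + 1)) = _ from funext (hΦ.dilation j)]
  exact (hΦ.moments n).const_smul_comp_smul _ (by positivity)

end DyadicResolution

section AlmostOrthogonality

lemma div_pow_mul_inv_one_add_pow_le {M : ℝ} (hM : 0 ≤ M) {n K j k : ℕ} (l : ℤ) (hK : M ≤ K)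
    (hn : 2 * M * ((k : ℝ) - j) ≤ n * ((k : ℝ) - j)) :
    ((2 : ℝ) ^ j / 2 ^ k) ^ n * ((1 + 2 ^ j * (2 : ℝ) ^ (-l)) ^ K)⁻¹ ≤
      (2 : ℝ) ^ (-(M * ((k : ℝ) - j + k - l))) := by
  have h_ratio : ((2 : ℝ) ^ j / 2 ^ k) ^ n ≤ (2 : ℝ) ^ (-(2 * M * ((k : ℝ) - j))) := calc
    ((2 : ℝ) ^ j / 2 ^ k) ^ n = (2 : ℝ) ^ (-(n * ((k : ℝ) - j))) := by
      rw [← Real.rpow_natCast 2 j, ← Real.rpow_natCast 2 k, ← Real.rpow_sub two_pos,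
        ← Real.rpow_mul_natCast two_pos.le]
      ring_nf
    _ ≤ (2 : ℝ) ^ (-(2 * M * ((k : ℝ) - j))) :=
      Real.rpow_le_rpow_of_exponent_le one_le_two (neg_le_neg hn)
  have h_radius : (2 : ℝ) ^ j * (2 : ℝ) ^ (-l) = (2 : ℝ) ^ ((j : ℝ) - l) := by
    rw [← Real.rpow_natCast, ← Real.rpow_intCast, ← Real.rpow_add two_pos, Int.cast_neg,
      sub_eq_add_neg]
  have h_tail : (2 : ℝ) ^ (M * ((j : ℝ) - l)) ≤ (1 + 2 ^ j * (2 : ℝ) ^ (-l)) ^ K := calc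
    (2 : ℝ) ^ (M * ((j : ℝ) - l)) = ((2 : ℝ) ^ j * (2 : ℝ) ^ (-l)) ^ M := by
      rw [h_radius, ← Real.rpow_mul two_pos.le, mul_comm]
    _ ≤ (1 + 2 ^ j * (2 : ℝ) ^ (-l)) ^ M :=
      Real.rpow_le_rpow (by positivity) (le_add_of_nonneg_left zero_le_one) hM
    _ ≤ (1 + 2 ^ j * (2 : ℝ) ^ (-l)) ^ (K : ℝ) :=
      Real.rpow_le_rpow_of_exponent_le (le_add_of_nonneg_right (by positivity)) hK
    _ = (1 + 2 ^ j * (2 : ℝ) ^ (-l)) ^ K := Real.rpow_natCast _ K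
  calc ((2 : ℝ) ^ j / 2 ^ k) ^ n * ((1 + 2 ^ j * (2 : ℝ) ^ (-l)) ^ K)⁻¹
      ≤ (2 : ℝ) ^ (-(2 * M * ((k : ℝ) - j))) * ((2 : ℝ) ^ (M * ((j : ℝ) - l)))⁻¹ := by gcongr
    _ = (2 : ℝ) ^ (-(M * ((k : ℝ) - j + k - l))) := by
      rw [← Real.rpow_neg two_pos.le, ← Real.rpow_add two_pos]
      ring_nf

variable {E F₁ F₂ F₃ : Type u} [NormedAddCommGroup E] [NormedSpace ℝ E] [FiniteDimensional ℝ E]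
  [MeasurableSpace E] [BorelSpace E] {μ : Measure E} [μ.IsAddHaarMeasure]
  [NormedAddCommGroup F₁] [NormedSpace ℝ F₁] [NormedAddCommGroup F₂] [NormedSpace ℝ F₂]
  [NormedAddCommGroup F₃] [NormedSpace ℝ F₃] [CompleteSpace F₁] [CompleteSpace F₂]
  [CompleteSpace F₃] {Φ : ℕ → 𝓢(E, F₁)} {Ψ : ℕ → 𝓢(E, F₂)}

lemma IsDyadicResolution.exists_setIntegral_norm_iteratedFDeriv_convolution_le
    (hΦ : IsDyadicResolution μ Φ) (hΨ : IsDyadicResolution μ Ψ) (L : F₁ →L[ℝ] F₂ →L[ℝ] F₃)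
    (m n K : ℕ) : ∃ C, ∀ j k, j ≤ k → HasVanishingMoments μ n (Φ k) → ∀ r, 0 ≤ r →
      ∫ x in {x | r ≤ ‖x‖}, ‖iteratedFDeriv ℝ m (Φ k ⋆[L, μ] Ψ j) x‖ ∂μ ≤
        C * ((2 : ℝ) ^ j) ^ m * (((2 : ℝ) ^ j / 2 ^ k) ^ n * ((1 + 2 ^ j * r) ^ K)⁻¹) := by
  set d := finrank ℝ E with hd
  obtain ⟨A, hA⟩ := hΨ.exists_weight_mul_norm_iteratedFDeriv_le (K + (d + 1)) (n + m)
  obtain ⟨B, hB⟩ := hΦ.exists_weight_mul_norm_iteratedFDeriv_le (n + (K + (d + 1)) + (d + 1)) 0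
  have h_A : 0 ≤ A := by simpa using le_trans (by positivity) (hA 0 0)
  refine ⟨‖L‖ * A * B * weightIntegral μ ^ 2, fun j k hjk h_moments r hr => ?_⟩
  have h_weight_integral := integral_norm_mul_weight_le (μ := μ) (h := Φ k) (n := n)
    (K := K + (d + 1)) (a := 2 ^ j) (b := 2 ^ k) (by positivity) (by gcongr; exact one_le_two)
    (by positivity) (by simpa using hB k)
  have h_pointwise : ∀ x, (1 + 2 ^ j * ‖x‖) ^ (K + (d + 1)) *
      ‖iteratedFDeriv ℝ m (Φ k ⋆[L, μ] Ψ j) x‖ ≤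
        ‖L‖ * (A * (2 ^ j) ^ (d + (n + m))) * (B * (2 ^ k) ^ d * ((2 ^ k) ^ n)⁻¹ *
          (((2 ^ k) ^ d)⁻¹ * weightIntegral μ)) := fun x =>
    (h_moments.weight_mul_norm_iteratedFDeriv_convolution_le L (Ψ j) m (by positivity) (hA j)
      x).trans (by gcongr)
  refine (setIntegral_norm_le_of_weight_mul_norm_le (by positivity) hr h_pointwise).trans_eq ?_
  rw [← hd, div_pow, pow_add, pow_add]
  field_simp

lemma IsDyadicResolution.exists_setIntegral_norm_iteratedFDeriv_convolution_le_rpow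
    (hΦ : IsDyadicResolution μ Φ) (hΨ : IsDyadicResolution μ Ψ) (L : F₁ →L[ℝ] F₂ →L[ℝ] F₃)
    {M : ℝ} (hM : 0 ≤ M) (m : ℕ) : ∃ C, ∀ (j k : ℕ) (l : ℤ), j ≤ k →
      ∫ x in {x | (2 : ℝ) ^ (-l) ≤ ‖x‖}, ‖iteratedFDeriv ℝ m (Φ k ⋆[L, μ] Ψ j) x‖ ∂μ ≤
        C * (2 : ℝ) ^ ((j : ℝ) * m) * (2 : ℝ) ^ (-(M * ((k : ℝ) - j + k - l))) := by
  obtain ⟨C₀, hC₀⟩ :=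
    hΦ.exists_setIntegral_norm_iteratedFDeriv_convolution_le hΨ L m 0 ⌈M⌉₊
  obtain ⟨C₁, hC₁⟩ :=
    hΦ.exists_setIntegral_norm_iteratedFDeriv_convolution_le hΨ L m ⌈2 * M⌉₊ ⌈M⌉₊
  have h_decay : ∀ {C : ℝ} {n : ℕ} (j k : ℕ) (l : ℤ), C ≤ max 0 (max C₀ C₁) →
      2 * M * ((k : ℝ) - j) ≤ n * ((k : ℝ) - j) →
      C * ((2 : ℝ) ^ j) ^ m * (((2 : ℝ) ^ j / 2 ^ k) ^ n *
        ((1 + 2 ^ j * (2 : ℝ) ^ (-l)) ^ ⌈M⌉₊)⁻¹) ≤ max 0 (max C₀ C₁) *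
          (2 : ℝ) ^ ((j : ℝ) * m) * (2 : ℝ) ^ (-(M * ((k : ℝ) - j + k - l))) :=
    fun j k l hC hn => by
      rw [Real.rpow_mul_natCast two_pos.le, Real.rpow_natCast]
      gcongr
      exact div_pow_mul_inv_one_add_pow_le hM l (Nat.le_ceil M) hn
  refine ⟨max 0 (max C₀ C₁), fun j k l hjk => ?_⟩
  rcases k with _ | k
  · obtain rfl : j = 0 := Nat.le_zero.1 hjk
    exact (hC₀ 0 0 le_rfl (fun p hp => absurd hp p.not_lt_zero) _ (by positivity)).trans
      (h_decay 0 0 l (by simp) (by simp))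
  · have h_gap : (0 : ℝ) ≤ (k + 1 : ℕ) - j := sub_nonneg.2 (mod_cast hjk)
    exact (hC₁ j (k + 1) hjk (hΦ.hasVanishingMoments _ k) _ (by positivity)).trans
      (h_decay j (k + 1) l (by simp) (mul_le_mul_of_nonneg_right (Nat.le_ceil _) h_gap))

theorem stmt11_general (hΦ : IsDyadicResolution μ Φ) (hΨ : IsDyadicResolution μ Ψ)
    (L : F₁ →L[ℝ] F₂ →L[ℝ] F₃) {M : ℝ} (hM : 0 ≤ M) (m : ℕ) :
    ∃ C > 0, ∀ (j k : ℕ) (l : ℤ),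
      ∫ x in {x | (2 : ℝ) ^ (-l) ≤ ‖x‖}, ‖iteratedFDeriv ℝ m (Φ j ⋆[L, μ] Ψ k) x‖ ∂μ ≤
        C * (2 : ℝ) ^ (((min j k : ℕ) : ℝ) * (m : ℝ)) *
          (2 : ℝ) ^ (-(M * (|(j : ℝ) - (k : ℝ)| + ((max j k : ℕ) : ℝ) - (l : ℝ)))) := by
  obtain ⟨C₁, hC₁⟩ :=
    hΨ.exists_setIntegral_norm_iteratedFDeriv_convolution_le_rpow hΦ L.flip hM m
  obtain ⟨C₂, hC₂⟩ := hΦ.exists_setIntegral_norm_iteratedFDeriv_convolution_le_rpow hΨ L hM m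
  refine ⟨max 1 (max C₁ C₂), lt_max_of_lt_left one_pos, fun j k l => ?_⟩
  rcases le_total j k with hjk | hkj
  · rw [min_eq_left hjk, max_eq_right hjk, abs_sub_comm,
      abs_of_nonneg (sub_nonneg.2 (mod_cast hjk)), ← convolution_flip]
    exact (hC₁ j k l hjk).trans (by gcongr; simp)
  · rw [min_eq_right hkj, max_eq_left hkj, abs_of_nonneg (sub_nonneg.2 (mod_cast hkj))]
    exact (hC₂ k j l hkj).trans (by gcongr; simp)

end AlmostOrthogonality

section Coordinates

variable {N : ℕ} {φ₁ : 𝓢(EuclideanSpace ℝ (Fin N), ℝ)}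

lemma hasVanishingMoments_of_integral_monomial
    (hφ₁ : ∀ α : Fin N → ℕ, ∫ x, (∏ i, x i ^ α i) * φ₁ x = 0) (n : ℕ) :
    HasVanishingMoments volume n φ₁ := by
  refine hasVanishingMoments_of_basis (EuclideanSpace.basisFun (Fin N) ℝ).toBasis φ₁
    fun p _ r => ?_
  have h_monomial : ∀ x : EuclideanSpace ℝ (Fin N),
      ∏ i, x (r i) = ∏ s, x s ^ Fintype.card {i // r i = s} := fun x => by
    rw [← Fintype.prod_fiberwise' r fun s => x s]
    simp
  simpa [h_monomial] using hφ₁ fun s => Fintype.card {i // r i = s}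

lemma isDyadicResolution_of_integral_monomial {Φ : ℕ → 𝓢(EuclideanSpace ℝ (Fin N), ℝ)}
    (hΦ : ∀ j, 1 ≤ j → ∀ x, Φ j x = (2 : ℝ) ^ (N * (j - 1)) * φ₁ ((2 : ℝ) ^ (j - 1) • x))
    (hφ₁ : ∀ α : Fin N → ℕ, ∫ x, (∏ i, x i ^ α i) * φ₁ x = 0) :
    IsDyadicResolution volume Φ := by
  have h_one : Φ 1 = φ₁ := by ext x; simpa using hΦ 1 le_rfl x
  refine ⟨fun j x => ?_, fun n => h_one ▸ hasVanishingMoments_of_integral_monomial hφ₁ n⟩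
  simpa [h_one] using hΦ (j + 1) (Nat.le_add_left 1 j) x

end Coordinates

end

/-- Almost-orthogonality estimate for generalized dyadic resolutions: with
`Φ_j(x) = 2^{N(j-1)} φ₁(2^{j-1}x)` and `Ψ_k(x) = 2^{N(k-1)} ψ₁(2^{k-1}x)` for `j,k ≥ 1`
(`Φ_0, Ψ_0` arbitrary Schwartz), where `φ₁, ψ₁` have all vanishing moments, for any
`M > 0` and derivative order `m` there is `C > 0` such that for all `j, k ∈ ℕ`, `l ∈ ℤ`,
`∫_{|x| ≥ 2^{-l}} ‖D^m(Φ_j ∗ Ψ_k)(x)‖ dx ≤ C 2^{min(j,k)m − M(|j−k| + max(j,k) − l)}`. -/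
theorem stmt11 (N : ℕ) (M : ℝ) (hM : 0 < M) (m : ℕ)
    (Φ Ψ : ℕ → SchwartzMap (EuclideanSpace ℝ (Fin N)) ℝ)
    (φ₁ ψ₁ : SchwartzMap (EuclideanSpace ℝ (Fin N)) ℝ)
    (hΦ : ∀ j, 1 ≤ j → ∀ x,
      Φ j x = (2 : ℝ) ^ (N * (j - 1)) * φ₁ ((2 : ℝ) ^ (j - 1) • x))
    (hΨ : ∀ j, 1 ≤ j → ∀ x,
      Ψ j x = (2 : ℝ) ^ (N * (j - 1)) * ψ₁ ((2 : ℝ) ^ (j - 1) • x))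
    (hφm : ∀ α : Fin N → ℕ,
      (∫ x : EuclideanSpace ℝ (Fin N), (∏ i, x i ^ α i) * φ₁ x) = 0)
    (hψm : ∀ α : Fin N → ℕ,
      (∫ x : EuclideanSpace ℝ (Fin N), (∏ i, x i ^ α i) * ψ₁ x) = 0) :
    ∃ C > 0, ∀ (j k : ℕ) (l : ℤ),
      (∫ x in {x : EuclideanSpace ℝ (Fin N) | (2 : ℝ) ^ (-l) ≤ ‖x‖},
          ‖iteratedFDeriv ℝ m
            (fun z : EuclideanSpace ℝ (Fin N) =>
              ∫ y : EuclideanSpace ℝ (Fin N), Φ j y * Ψ k (z - y)) x‖)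
        ≤ C * (2 : ℝ) ^ (((min j k : ℕ) : ℝ) * (m : ℝ)) *
            (2 : ℝ) ^ (-(M * (|(j : ℝ) - (k : ℝ)| + ((max j k : ℕ) : ℝ) - (l : ℝ)))) := by
  exact stmt11_general (isDyadicResolution_of_integral_monomial hΦ hφm)
    (isDyadicResolution_of_integral_monomial hΨ hψm) (.mul ℝ ℝ) hM.le m
end

section
/- There exists a Schwartz function φ_0 on ℝ^N with ∫ φ_0 = 1, ∫ x^α φ_0(x) dx = 0 for all multi-indices α ≠ 0, and supp φ_0 ⊆ {(x', x_N) : x_N < −|x'|} ∩ {x_N < −1}. -/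
open MeasureTheory

/-!
For `q > 1` let `G z = ∏_{k ≥ 1} (1 - z / q ^ k) = ∑ⱼ cⱼ z ^ j`. Given a bump function `ψ` supported
in a cone of `ℝ^N`, superpose its dilates to `φ x = ∑ⱼ cⱼ q ^ (-j N) ψ (q ^ (-j) x)`. The `cⱼ` decay
superexponentially, so the series converges in the Schwartz space, and scaling turns the integral of
`φ` against a homogeneous polynomial `P` of degree `d` into `∫ P φ = G (q ^ d) ∫ P ψ`. This vanishes
for `d ≥ 1`, while `G 1 ≠ 0`.
-/

open Filter Module Topology
open scoped SchwartzMap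

section EulerSeries

variable {q : ℝ}

/-- The Taylor coefficients of the entire function `z ↦ ∏_{k ≥ 1} (1 - z / q ^ k)`, for `q > 1`.
They are the weights of the dilates in `eulerSuperposition`. -/
noncomputable def eulerCoeff (q : ℝ) (j : ℕ) : ℝ :=
  ∏ i ∈ Finset.range j, (1 - q ^ (i + 1))⁻¹

/-- The entire function `z ↦ ∏_{k ≥ 1} (1 - z / q ^ k)`, for `q > 1`. It is encoded by its power
series, because the coefficients are what enters `eulerSuperposition`; its values at the powers of
`q` are the factors by which superposition changes moments. -/
noncomputable def eulerSeries (q z : ℝ) : ℝ :=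
  ∑' j, eulerCoeff q j * z ^ j

lemma eulerCoeff_zero : eulerCoeff q 0 = 1 :=
  Finset.prod_range_zero _

lemma eulerCoeff_succ (q : ℝ) (j : ℕ) :
    eulerCoeff q (j + 1) = eulerCoeff q j * (1 - q ^ (j + 1))⁻¹ :=
  Finset.prod_range_succ _ _

lemma one_sub_pow_succ_ne_zero (hq : 1 < q) (j : ℕ) : 1 - q ^ (j + 1) ≠ 0 :=
  (sub_neg.2 (one_lt_pow₀ hq j.succ_ne_zero)).ne

lemma eulerCoeff_ne_zero (hq : 1 < q) (j : ℕ) : eulerCoeff q j ≠ 0 :=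
  Finset.prod_ne_zero_iff.2 fun i _ => inv_ne_zero (one_sub_pow_succ_ne_zero hq i)

lemma summable_eulerCoeff_mul_pow (hq : 1 < q) (z : ℝ) :
    Summable fun j => eulerCoeff q j * z ^ j := by
  rcases eq_or_ne z 0 with rfl | hz
  · exact summable_of_ne_finset_zero (s := {0}) fun j hj => by simp_all
  have hne (j : ℕ) : eulerCoeff q j * z ^ j ≠ 0 :=
    mul_ne_zero (eulerCoeff_ne_zero hq j) (pow_ne_zero j hz)
  have hratio (j : ℕ) : ‖eulerCoeff q (j + 1) * z ^ (j + 1)‖ / ‖eulerCoeff q j * z ^ j‖ =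
      ‖z * (1 - q ^ (j + 1))⁻¹‖ := by
    rw [div_eq_iff (norm_ne_zero_iff.2 (hne j)), ← norm_mul, eulerCoeff_succ, pow_succ]
    ring_nf
  have hlim : Tendsto (fun j : ℕ => ‖z * (1 - q ^ (j + 1))⁻¹‖) atTop (𝓝 0) := by
    have hpow : Tendsto (fun j : ℕ => 1 - q ^ (j + 1)) atTop atBot :=
      tendsto_atBot_add_const_left _ 1
        (tendsto_neg_atTop_atBot.comp
          ((tendsto_pow_atTop_atTop_of_one_lt hq).comp (tendsto_add_atTop_nat 1)))
    simpa using (hpow.inv_tendsto_atBot.const_mul z).norm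
  exact summable_of_ratio_test_tendsto_lt_one one_pos (.of_forall hne)
    (hlim.congr fun j => (hratio j).symm)

lemma eulerSeries_mul_left (hq : 1 < q) (z : ℝ) :
    eulerSeries q (q * z) = (1 - z) * eulerSeries q z := by
  have hcoeff (j : ℕ) :
      eulerCoeff q (j + 1) * (q * z) ^ (j + 1) - eulerCoeff q (j + 1) * z ^ (j + 1) =
        -z * (eulerCoeff q j * z ^ j) := by
    rw [eulerCoeff_succ, mul_pow]
    field_simp [one_sub_pow_succ_ne_zero hq j]
    ring
  have hsum (w : ℝ) : eulerSeries q w = 1 + ∑' j, eulerCoeff q (j + 1) * w ^ (j + 1) := by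
    rw [eulerSeries, (summable_eulerCoeff_mul_pow hq w).tsum_eq_zero_add, eulerCoeff_zero, pow_zero,
      one_mul]
  have hsummable (w : ℝ) : Summable fun j => eulerCoeff q (j + 1) * w ^ (j + 1) :=
    (summable_nat_add_iff 1).2 (summable_eulerCoeff_mul_pow hq w)
  have hdiff : eulerSeries q (q * z) - eulerSeries q z = -z * eulerSeries q z := by
    rw [hsum (q * z), hsum z, add_sub_add_left_eq_sub,
      ← (hsummable _).tsum_sub (hsummable _), ← hsum z]
    simp only [hcoeff, tsum_mul_left, eulerSeries]
  linear_combination hdiff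

lemma eulerSeries_pow_eq_zero (hq : 1 < q) {d : ℕ} (hd : d ≠ 0) : eulerSeries q (q ^ d) = 0 := by
  obtain ⟨d, rfl⟩ := Nat.exists_eq_succ_of_ne_zero hd
  clear hd
  induction d with
  | zero => simpa using eulerSeries_mul_left hq 1
  | succ d ih => rw [pow_succ', eulerSeries_mul_left hq, ih, mul_zero]

lemma tendsto_eulerSeries_inv_pow (hq : 1 < q) :
    Tendsto (fun k : ℕ => eulerSeries q (q⁻¹ ^ k)) atTop (𝓝 1) := by
  have hq₀ : 0 < q := one_pos.trans hq
  have hlim : Tendsto (fun k : ℕ => q⁻¹ ^ k) atTop (𝓝 0) :=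
    tendsto_pow_atTop_nhds_zero_of_lt_one (inv_pos.2 hq₀).le (inv_lt_one_of_one_lt₀ hq)
  have hzero : eulerSeries q 0 = 1 := by
    rw [eulerSeries, tsum_eq_single 0 fun j hj => by simp [hj], eulerCoeff_zero, pow_zero, one_mul]
  rw [← hzero]
  refine tendsto_tsum_of_dominated_convergence (bound := fun j => ‖eulerCoeff q j‖) ?_
    (fun j => (hlim.pow j).const_mul _) (.of_forall fun k j => ?_)
  · simpa using (summable_eulerCoeff_mul_pow hq 1).norm
  · have hpow_le : (q⁻¹ ^ k) ^ j ≤ 1 :=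
      pow_le_one₀ (by positivity) (pow_le_one₀ (by positivity) (inv_le_one_of_one_le₀ hq.le))
    rw [norm_mul, Real.norm_of_nonneg (by positivity : 0 ≤ (q⁻¹ ^ k) ^ j)]
    exact mul_le_of_le_one_right (norm_nonneg _) hpow_le

/- A zero at `1` would propagate through the functional equation to all `q⁻¹ ^ k`, which accumulate
at `0`, where the value is `1`. -/
lemma eulerSeries_one_ne_zero (hq : 1 < q) : eulerSeries q 1 ≠ 0 := by
  intro hone
  have hq₀ : 0 < q := one_pos.trans hq
  have hzero (k : ℕ) : eulerSeries q (q⁻¹ ^ k) = 0 := by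
    induction k with
    | zero => rwa [pow_zero]
    | succ k ih =>
      have hfactor : 1 - q⁻¹ ^ (k + 1) ≠ 0 :=
        (sub_pos.2 (pow_lt_one₀ (inv_pos.2 hq₀).le (inv_lt_one_of_one_lt₀ hq) k.succ_ne_zero)).ne'
      have hstep := eulerSeries_mul_left hq (q⁻¹ ^ (k + 1))
      rw [pow_succ' q⁻¹, mul_inv_cancel_left₀ hq₀.ne', ih, ← pow_succ'] at hstep
      exact (mul_eq_zero.1 hstep.symm).resolve_left hfactor
  have hlim := tendsto_eulerSeries_inv_pow hq
  simp only [hzero] at hlim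
  exact zero_ne_one (tendsto_nhds_unique tendsto_const_nhds hlim)

end EulerSeries

section SchwartzSeries

variable {ι E F : Type*} [NormedAddCommGroup E] [NormedSpace ℝ E]
  [NormedAddCommGroup F] [NormedSpace ℝ F] {f : ι → 𝓢(E, F)}

lemma exists_schwartzMap_eq_tsum [CompleteSpace F]
    (hf : ∀ k n, Summable fun i => SchwartzMap.seminorm ℝ k n (f i)) :
    ∃ g : 𝓢(E, F), (∀ x, g x = ∑' i, f i x) ∧
      ∀ k n, SchwartzMap.seminorm ℝ k n g ≤ ∑' i, SchwartzMap.seminorm ℝ k n (f i) := by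
  have hderiv (n : ℕ) (x : E) : iteratedFDeriv ℝ n (fun y => ∑' i, f i y) x =
      ∑' i, iteratedFDeriv ℝ n (f i) x :=
    iteratedFDeriv_tsum_apply (N := ⊤) (fun i => (f i).smooth ⊤) (fun n _ => hf 0 n)
      (fun n i x _ => (f i).norm_iteratedFDeriv_le_seminorm ℝ n x) le_top x
  have hbound (k n : ℕ) (x : E) : ‖x‖ ^ k * ‖iteratedFDeriv ℝ n (fun y => ∑' i, f i y) x‖ ≤
      ∑' i, SchwartzMap.seminorm ℝ k n (f i) := by
    have hnorm : Summable fun i => ‖iteratedFDeriv ℝ n (f i) x‖ :=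
      .of_nonneg_of_le (fun _ => norm_nonneg _)
        (fun i => (f i).norm_iteratedFDeriv_le_seminorm ℝ n x) (hf 0 n)
    calc ‖x‖ ^ k * ‖iteratedFDeriv ℝ n (fun y => ∑' i, f i y) x‖
        ≤ ‖x‖ ^ k * ∑' i, ‖iteratedFDeriv ℝ n (f i) x‖ := by
          rw [hderiv]
          gcongr
          exact norm_tsum_le_tsum_norm hnorm
      _ = ∑' i, ‖x‖ ^ k * ‖iteratedFDeriv ℝ n (f i) x‖ := tsum_mul_left.symm
      _ ≤ ∑' i, SchwartzMap.seminorm ℝ k n (f i) :=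
          (hnorm.mul_left _).tsum_le_tsum (fun i => (f i).le_seminorm ℝ k n x) (hf k n)
  refine ⟨⟨fun x => ∑' i, f i x, ?_, fun k n => ⟨_, hbound k n⟩⟩, fun _ => rfl, fun k n =>
    SchwartzMap.seminorm_le_bound ℝ k n _ (tsum_nonneg fun _ => apply_nonneg _ _) (hbound k n)⟩
  exact contDiff_tsum (N := ⊤) (fun i => (f i).smooth ⊤) (fun n _ => hf 0 n)
    fun n i x _ => (f i).norm_iteratedFDeriv_le_seminorm ℝ n x

lemma summable_schwartzMap_of_summable_seminorm [CompleteSpace F]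
    (hf : ∀ k n, Summable fun i => SchwartzMap.seminorm ℝ k n (f i)) : Summable f := by
  obtain ⟨g, hg, -⟩ := exists_schwartzMap_eq_tsum hf
  refine ⟨g, ((schwartz_withSeminorms ℝ E F).tendsto_nhds _ g).2 fun ⟨k, n⟩ ε hε => ?_⟩
  have htendsto := tendsto_tsum_compl_atTop_zero fun i => SchwartzMap.seminorm ℝ k n (f i)
  filter_upwards [htendsto.eventually (gt_mem_nhds hε)] with s hs
  obtain ⟨r, hr, hr_le⟩ := exists_schwartzMap_eq_tsum
    (f := fun i : {i // i ∉ s} => f i) fun k n => (hf k n).subtype _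
  have htail : g - ∑ i ∈ s, f i = r := by
    ext x
    have hx : Summable fun i => f i x :=
      .of_norm_bounded (hf 0 0) fun i => (f i).norm_le_seminorm ℝ x
    rw [sub_apply, sum_apply, hg, hr, ← hx.sum_add_tsum_subtype_compl s,
      add_sub_cancel_left]
  rw [SchwartzMap.schwartzSeminormFamily_apply, map_sub_rev, htail]
  exact (hr_le k n).trans_lt hs

lemma schwartzMap_tsum_apply (hf : Summable f) (x : E) : (∑' i, f i) x = ∑' i, f i x := by
  let evalAt : 𝓢(E, F) →L[ℝ] F :=
    (BoundedContinuousFunction.evalCLM ℝ x).comp (SchwartzMap.toBoundedContinuousFunctionCLM ℝ E F)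
  exact evalAt.map_tsum hf

end SchwartzSeries

section Dilation

variable {E F : Type*} [NormedAddCommGroup E] [NormedSpace ℝ E]
  [NormedAddCommGroup F] [NormedSpace ℝ F]

/-- The dilation of Schwartz functions by a factor `s ≠ 0`, normalised so that it dilates supports
by `s`: the function `f` becomes `x ↦ f (s⁻¹ • x)`. -/
noncomputable def schwartzDilation (s : ℝˣ) : 𝓢(E, F) →L[ℝ] 𝓢(E, F) :=
  SchwartzMap.compCLMOfContinuousLinearEquiv ℝ (ContinuousLinearEquiv.smulLeft s⁻¹)

lemma schwartzDilation_apply (s : ℝˣ) (f : 𝓢(E, F)) (x : E) :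
    schwartzDilation s f x = f ((s : ℝ)⁻¹ • x) := by
  rw [← Units.val_inv_eq_inv_val]
  rfl

lemma seminorm_schwartzDilation_le (s : ℝˣ) (k n : ℕ) (f : 𝓢(E, F)) :
    SchwartzMap.seminorm ℝ k n (schwartzDilation s f) ≤
      ‖(s : ℝ)‖ ^ k * ‖(s : ℝ)⁻¹‖ ^ n * SchwartzMap.seminorm ℝ k n f := by
  refine SchwartzMap.seminorm_le_bound ℝ k n _ (by positivity) fun x => ?_
  have hderiv : iteratedFDeriv ℝ n (schwartzDilation s f) x =
      (s : ℝ)⁻¹ ^ n • iteratedFDeriv ℝ n f ((s : ℝ)⁻¹ • x) := by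
    rw [funext (schwartzDilation_apply s f), iteratedFDeriv_comp_const_smul _ (f.smooth n)]
  have hnorm : ‖x‖ = ‖(s : ℝ)‖ * ‖(s : ℝ)⁻¹ • x‖ := by
    rw [← norm_smul, smul_inv_smul₀ s.ne_zero]
  calc ‖x‖ ^ k * ‖iteratedFDeriv ℝ n (schwartzDilation s f) x‖
      = ‖(s : ℝ)‖ ^ k * ‖(s : ℝ)⁻¹‖ ^ n *
          (‖(s : ℝ)⁻¹ • x‖ ^ k * ‖iteratedFDeriv ℝ n f ((s : ℝ)⁻¹ • x)‖) := by
        rw [hderiv, norm_smul, norm_pow, hnorm]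
        ring
    _ ≤ ‖(s : ℝ)‖ ^ k * ‖(s : ℝ)⁻¹‖ ^ n * SchwartzMap.seminorm ℝ k n f := by
        gcongr
        exact f.le_seminorm ℝ k n _

lemma integral_smul_schwartzDilation [FiniteDimensional ℝ E] [MeasurableSpace E] [BorelSpace E]
    (μ : Measure E) [μ.IsAddHaarMeasure] (s : ℝˣ) {c : ℝ} {P : E → ℝ}
    (hP : ∀ x, P ((s : ℝ) • x) = c * P x) (f : 𝓢(E, F)) :
    ∫ x, P x • schwartzDilation s f x ∂μ = (|(s : ℝ)| ^ finrank ℝ E * c) • ∫ x, P x • f x ∂μ := by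
  have hintegrand (x : E) : P x • schwartzDilation s f x =
      c • (P ((s : ℝ)⁻¹ • x) • f ((s : ℝ)⁻¹ • x)) := by
    rw [schwartzDilation_apply, smul_smul, ← hP, smul_inv_smul₀ s.ne_zero]
  simp only [hintegrand]
  rw [integral_smul, Measure.integral_comp_inv_smul μ (fun y => P y • f y), smul_smul, abs_pow,
    mul_comm]

end Dilation

section EulerSuperposition

variable {E F : Type*} [NormedAddCommGroup E] [NormedSpace ℝ E]
  [NormedAddCommGroup F] [NormedSpace ℝ F] {q : ℝˣ}

/-- The superposition `x ↦ ∑ⱼ cⱼ q ^ (-j N) ψ (q ^ (-j) x)` of dilates of `ψ`, where `N = dim E` and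
`cⱼ = eulerCoeff q j`. Its moments of positive degree vanish. The factor `q ^ (-j N)` makes all
dilates have the same integral. -/
noncomputable def eulerSuperposition (q : ℝˣ) (ψ : 𝓢(E, F)) : 𝓢(E, F) :=
  ∑' j : ℕ, (eulerCoeff q j * (((q : ℝ) ^ finrank ℝ E)⁻¹) ^ j) • schwartzDilation (q ^ j) ψ

lemma summable_eulerSuperposition [CompleteSpace F] (hq : 1 < (q : ℝ)) (ψ : 𝓢(E, F)) :
    Summable fun j : ℕ =>
      (eulerCoeff q j * (((q : ℝ) ^ finrank ℝ E)⁻¹) ^ j) • schwartzDilation (q ^ j) ψ := by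
  refine summable_schwartzMap_of_summable_seminorm fun k n => ?_
  let z : ℝ := ((q : ℝ) ^ finrank ℝ E)⁻¹ * (q : ℝ) ^ k * (q : ℝ)⁻¹ ^ n
  refine .of_nonneg_of_le (fun _ => apply_nonneg _ _) (fun j => ?_)
    ((summable_eulerCoeff_mul_pow hq z).norm.mul_right (SchwartzMap.seminorm ℝ k n ψ))
  calc SchwartzMap.seminorm ℝ k n
        ((eulerCoeff q j * (((q : ℝ) ^ finrank ℝ E)⁻¹) ^ j) • schwartzDilation (q ^ j) ψ)
      ≤ ‖eulerCoeff q j * (((q : ℝ) ^ finrank ℝ E)⁻¹) ^ j‖ *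
          (‖((q ^ j : ℝˣ) : ℝ)‖ ^ k * ‖((q ^ j : ℝˣ) : ℝ)⁻¹‖ ^ n *
            SchwartzMap.seminorm ℝ k n ψ) := by
        rw [map_smul_eq_mul]
        gcongr
        exact seminorm_schwartzDilation_le _ k n ψ
    _ = ‖eulerCoeff q j * z ^ j‖ * SchwartzMap.seminorm ℝ k n ψ := by
        simp only [z, Units.val_pow_eq_pow_val, norm_mul, norm_pow, norm_inv, inv_pow]
        ring

lemma integral_smul_eulerSuperposition [CompleteSpace F] [FiniteDimensional ℝ E]
    [MeasurableSpace E] [BorelSpace E] (μ : Measure E) [μ.IsAddHaarMeasure] (hq : 1 < (q : ℝ))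
    {c : ℝ} {P : E → ℝ} (hP_growth : P.HasTemperateGrowth)
    (hP : ∀ x, P ((q : ℝ) • x) = c * P x) (ψ : 𝓢(E, F)) :
    ∫ x, P x • eulerSuperposition q ψ x ∂μ = eulerSeries q c • ∫ x, P x • ψ x ∂μ := by
  let moment : 𝓢(E, F) →L[ℝ] F :=
    (SchwartzMap.integralCLM ℝ μ).comp (SchwartzMap.smulLeftCLM F P)
  have hmoment (f : 𝓢(E, F)) : moment f = ∫ x, P x • f x ∂μ := by
    simp only [moment, ContinuousLinearMap.comp_apply, SchwartzMap.integralCLM_apply,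
      SchwartzMap.smulLeftCLM_apply_apply hP_growth]
  have hP_pow (j : ℕ) (x : E) : P (((q ^ j : ℝˣ) : ℝ) • x) = c ^ j * P x := by
    induction j with
    | zero => simp
    | succ j ih =>
      rw [pow_succ', Units.val_mul, mul_smul, hP, ih, pow_succ']
      ring
  have hq₀ : 0 < (q : ℝ) := one_pos.trans hq
  have hterm (j : ℕ) :
      moment ((eulerCoeff q j * (((q : ℝ) ^ finrank ℝ E)⁻¹) ^ j) • schwartzDilation (q ^ j) ψ) =
        (eulerCoeff q j * c ^ j) • ∫ x, P x • ψ x ∂μ := by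
    rw [map_smul, hmoment, integral_smul_schwartzDilation μ _ (hP_pow j), smul_smul,
      Units.val_pow_eq_pow_val, abs_of_pos (pow_pos hq₀ j), pow_right_comm, inv_pow]
    congr 1
    field_simp
  rw [← hmoment, eulerSuperposition, moment.map_tsum (summable_eulerSuperposition hq ψ)]
  simp only [hterm]
  exact (summable_eulerCoeff_mul_pow hq c).tsum_smul_const _

lemma tsupport_eulerSuperposition_subset [CompleteSpace F] (hq : 1 < (q : ℝ)) {S : Set E}
    (hS_closed : IsClosed S) (hS_smul : ∀ x ∈ S, (q : ℝ) • x ∈ S) {ψ : 𝓢(E, F)}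
    (hψ : tsupport ψ ⊆ S) : tsupport (eulerSuperposition q ψ) ⊆ S := by
  have hS_pow (j : ℕ) {x : E} (hx : x ∈ S) : ((q ^ j : ℝˣ) : ℝ) • x ∈ S := by
    induction j with
    | zero => simpa using hx
    | succ j ih => simpa only [pow_succ', Units.val_mul, mul_smul] using hS_smul _ ih
  refine closure_minimal (fun x hx => ?_) hS_closed
  contrapose! hx
  have hdilate (j : ℕ) : schwartzDilation (q ^ j) ψ x = 0 := by
    rw [schwartzDilation_apply]
    refine image_eq_zero_of_notMem_tsupport fun hmem => hx ?_
    simpa only [smul_inv_smul₀ (q ^ j).ne_zero] using hS_pow j (hψ hmem)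
  rw [Function.notMem_support, eulerSuperposition,
    schwartzMap_tsum_apply (summable_eulerSuperposition hq ψ)]
  simp only [smul_apply, hdilate, smul_zero, tsum_zero]

end EulerSuperposition

section HigherMoments

variable {E : Type*} [NormedAddCommGroup E] [NormedSpace ℝ E] [FiniteDimensional ℝ E]
  [MeasurableSpace E] [BorelSpace E] (μ : Measure E) [μ.IsAddHaarMeasure]

lemma exists_schwartzMap_integral_eq_one_tsupport_subset {S : Set E} {x₀ : E} (hS : S ∈ 𝓝 x₀) :
    ∃ ψ : 𝓢(E, ℝ), ∫ x, ψ x ∂μ = 1 ∧ tsupport ψ ⊆ S := by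
  obtain ⟨r, hr, hball⟩ := Metric.nhds_basis_closedBall.mem_iff.1 hS
  let b : ContDiffBump x₀ := ⟨r / 2, r, half_pos hr, half_lt_self hr⟩
  exact ⟨b.hasCompactSupport_normed.toSchwartzMap b.contDiff_normed, b.integral_normed (μ := μ),
    (b.tsupport_normed_eq (μ := μ)).trans_subset hball⟩

theorem stmt12_general {q : ℝ} (hq : 1 < q) {S : Set E} {x₀ : E} (hS_closed : IsClosed S)
    (hS_smul : ∀ x ∈ S, q • x ∈ S) (hS_nhds : S ∈ 𝓝 x₀) :
    ∃ φ : 𝓢(E, ℝ), ∫ x, φ x ∂μ = 1 ∧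
      (∀ (P : E → ℝ) (d : ℕ), P.HasTemperateGrowth → (∀ x, P (q • x) = q ^ d * P x) → d ≠ 0 →
        ∫ x, P x * φ x ∂μ = 0) ∧
      tsupport φ ⊆ S := by
  lift q to ℝˣ using (one_pos.trans hq).ne'.isUnit
  obtain ⟨ψ, hψ_integral, hψ_tsupport⟩ :=
    exists_schwartzMap_integral_eq_one_tsupport_subset μ hS_nhds
  refine ⟨(eulerSeries q 1)⁻¹ • eulerSuperposition q ψ, ?_, fun P d hP_growth hP hd => ?_, ?_⟩
  · have hmoment := integral_smul_eulerSuperposition μ hq (P := fun _ => 1) (c := 1)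
      (.const 1) (by simp) ψ
    simp only [smul_eq_mul, one_mul, hψ_integral, mul_one] at hmoment
    simp only [smul_apply, smul_eq_mul, integral_const_mul, hmoment]
    exact inv_mul_cancel₀ (eulerSeries_one_ne_zero hq)
  · have hmoment := integral_smul_eulerSuperposition μ hq hP_growth hP ψ
    rw [eulerSeries_pow_eq_zero hq hd, zero_smul] at hmoment
    simp only [smul_apply, smul_eq_mul, mul_left_comm (P _), integral_const_mul] at hmoment ⊢
    rw [hmoment, mul_zero]
  · exact (tsupport_smul_subset_right (fun _ => (eulerSeries q 1)⁻¹) _).trans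
      (tsupport_eulerSuperposition_subset hq hS_closed hS_smul hψ_tsupport)

end HigherMoments

section Monomial

variable {ι : Type*}

lemma hasTemperateGrowth_finset_prod {D : Type*} [NormedAddCommGroup D] [NormedSpace ℝ D]
    {f : ι → D → ℝ} (s : Finset ι) (hf : ∀ i ∈ s, (f i).HasTemperateGrowth) :
    (fun x => ∏ i ∈ s, f i x).HasTemperateGrowth := by
  induction s using Finset.cons_induction with
  | empty => simp
  | cons i s hi ih =>
    simp only [Finset.prod_cons]
    rw [Finset.forall_mem_cons] at hf
    exact hf.1.mul (ih hf.2)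

variable [Fintype ι]

lemma hasTemperateGrowth_monomial (α : ι → ℕ) (m : ℕ) :
    (fun x : EuclideanSpace ℝ ι × ℝ => (∏ i, x.1 i ^ α i) * x.2 ^ m).HasTemperateGrowth := by
  have hfst (i : ι) : (fun x : EuclideanSpace ℝ ι × ℝ => x.1 i).HasTemperateGrowth :=
    ((EuclideanSpace.proj i).comp (ContinuousLinearMap.fst ℝ _ ℝ) :
      EuclideanSpace ℝ ι × ℝ →L[ℝ] ℝ).hasTemperateGrowth
  have hsnd : (fun x : EuclideanSpace ℝ ι × ℝ => x.2).HasTemperateGrowth :=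
    (ContinuousLinearMap.snd ℝ (EuclideanSpace ℝ ι) ℝ).hasTemperateGrowth
  exact (hasTemperateGrowth_finset_prod _ fun i _ => (hfst i).pow _).mul (hsnd.pow m)

lemma monomial_smul (α : ι → ℕ) (m : ℕ) (c : ℝ) (x : EuclideanSpace ℝ ι × ℝ) :
    (∏ i, (c • x).1 i ^ α i) * (c • x).2 ^ m =
      c ^ (∑ i, α i + m) * ((∏ i, x.1 i ^ α i) * x.2 ^ m) := by
  simp only [Prod.smul_fst, Prod.smul_snd, PiLp.smul_apply, smul_eq_mul, mul_pow,
    Finset.prod_mul_distrib, Finset.prod_pow_eq_pow_sum, pow_add]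
  ring

end Monomial

section DownwardCone

variable {E : Type*} [NormedAddCommGroup E]

/-- A closed set inside the downward cone `{(x', t) | t < -‖x'‖} ∩ {(x', t) | t < -1}` that, like
the cone, is stable under dilation by factors at least `1`. The factor `2` keeps it away from the
boundary of the cone. -/
def closedDownwardCone (E : Type*) [NormedAddCommGroup E] : Set (E × ℝ) :=
  {x | 2 * max 1 ‖x.1‖ ≤ -x.2}

lemma isClosed_closedDownwardCone : IsClosed (closedDownwardCone E) :=
  isClosed_le (by fun_prop) (by fun_prop)

lemma closedDownwardCone_mem_nhds : closedDownwardCone E ∈ 𝓝 ((0 : E), (-3 : ℝ)) := by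
  have hlt : ∀ᶠ x : E × ℝ in 𝓝 (0, -3), 2 * max 1 ‖x.1‖ < -x.2 :=
    ContinuousAt.eventually_lt (by fun_prop) (by fun_prop) (by norm_num)
  exact hlt.mono fun _ => le_of_lt

lemma smul_mem_closedDownwardCone [NormedSpace ℝ E] {c : ℝ} (hc : 1 ≤ c) {x : E × ℝ}
    (hx : x ∈ closedDownwardCone E) : c • x ∈ closedDownwardCone E := by
  have hc₀ : 0 ≤ c := zero_le_one.trans hc
  calc 2 * max 1 ‖(c • x).1‖ ≤ 2 * max c (c * ‖x.1‖) := by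
        rw [Prod.smul_fst, norm_smul, Real.norm_of_nonneg hc₀]
        gcongr
    _ = c * (2 * max 1 ‖x.1‖) := by
        rw [mul_left_comm, mul_max_of_nonneg _ _ hc₀, mul_one]
    _ ≤ c * -x.2 := mul_le_mul_of_nonneg_left hx hc₀
    _ = -(c • x).2 := mul_neg c x.2

lemma closedDownwardCone_subset :
    closedDownwardCone E ⊆ {x | x.2 < -‖x.1‖} ∩ {x | x.2 < -1} := by
  intro x (hx : 2 * max 1 ‖x.1‖ ≤ -x.2)
  constructor <;> simp only [Set.mem_ofPred_eq] <;>
    linarith [le_max_left 1 ‖x.1‖, le_max_right 1 ‖x.1‖]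

end DownwardCone

/-- Existence of a Schwartz function `φ₀` on `ℝ^{n+1} = ℝ^n × ℝ` with unit integral,
all higher moments vanishing, supported in the downward cone
`{x_N < -|x'|} ∩ {x_N < -1}`. -/
theorem stmt12 (n : ℕ) :
    ∃ φ₀ : SchwartzMap (EuclideanSpace ℝ (Fin n) × ℝ) ℝ,
      (∫ x : EuclideanSpace ℝ (Fin n) × ℝ, φ₀ x) = 1 ∧
      (∀ (α : Fin n → ℕ) (m : ℕ), ¬(α = 0 ∧ m = 0) →
        (∫ x : EuclideanSpace ℝ (Fin n) × ℝ,
          (∏ i, x.1 i ^ α i) * x.2 ^ m * φ₀ x) = 0) ∧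
      tsupport φ₀ ⊆
        {x : EuclideanSpace ℝ (Fin n) × ℝ | x.2 < -‖x.1‖} ∩ {x | x.2 < -1} := by
  obtain ⟨φ, hφ_integral, hφ_moment, hφ_tsupport⟩ := stmt12_general
    (S := closedDownwardCone (EuclideanSpace ℝ (Fin n))) (volume.prod volume) one_lt_two
    isClosed_closedDownwardCone (fun _ => smul_mem_closedDownwardCone one_le_two)
    closedDownwardCone_mem_nhds
  refine ⟨φ, hφ_integral, fun α m h => ?_, hφ_tsupport.trans closedDownwardCone_subset⟩
  exact hφ_moment _ _ (hasTemperateGrowth_monomial α m) (monomial_smul α m 2)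
    (by simpa [Finset.sum_eq_zero_iff, funext_iff] using h)
end
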